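/- Let v be a TU-game on N = {1,…,n}, let γ_S > 0 be weights for all nonempty proper subsets S of N, let v* be a closest balanced game to v, let x* ∈ C(v*), and set 𝒜* = {S : S nonempty proper subset of N, x*(S) ≤ v(S)}. Then for every minimal balanced collection 𝓑 ∈ 𝔅*(n) and every system of balancing weights (λ_S)_{S∈𝓑} of 𝓑: ∑_{S∈𝓑} λ_S v*(S) = v*(N) if and only if 𝓑 ⊆ 𝒜*. -/

import Mathlib

open Finset

/-- Sum of an allocation `x` over a coalition `S`: `x(S) = ∑_{i ∈ S} x_i`. -/
def coalSum {n : ℕ} (x : Fin n → ℝ) (S : Finset (Fin n)) : ℝ := ∑ i ∈ S, x i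

/-- `x` belongs to the core of the TU-game `v`. -/
def inCore {n : ℕ} (v : Finset (Fin n) → ℝ) (x : Fin n → ℝ) : Prop :=
  coalSum x Finset.univ = v Finset.univ ∧ ∀ S : Finset (Fin n), v S ≤ coalSum x S

/-- A game is balanced iff its core is nonempty. -/
def IsBalancedGame {n : ℕ} (v : Finset (Fin n) → ℝ) : Prop := ∃ x, inCore v x

/-- The nonempty proper subsets of `N = {1,…,n}`. -/
def propSubsets (n : ℕ) : Finset (Finset (Fin n)) :=
  Finset.univ.filter (fun S => S ≠ ∅ ∧ S ≠ Finset.univ)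

/-- Weighted squared distance `∑_{∅≠S⊊N} γ_S (v(S) − w(S))²` between games. -/
def dist2 {n : ℕ} (γ v w : Finset (Fin n) → ℝ) : ℝ :=
  ∑ S ∈ propSubsets n, γ S * (v S - w S) ^ 2

/-- `w` is a closest balanced game to `v` with respect to the weights `γ`:
`w` is a balanced game with `w(N) = v(N)` minimizing the weighted squared distance
to `v` among all balanced games `u` with `u(N) = v(N)`. -/
def IsClosestBalanced {n : ℕ} (γ v w : Finset (Fin n) → ℝ) : Prop :=
  w ∅ = 0 ∧ IsBalancedGame w ∧ w Finset.univ = v Finset.univ ∧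
    ∀ u : Finset (Fin n) → ℝ, u ∅ = 0 → IsBalancedGame u →
      u Finset.univ = v Finset.univ → dist2 γ v w ≤ dist2 γ v u

/-- `lam` is a system of balancing weights for the collection `B`:
all weights are positive and `∑_{S∈B, S∋i} λ_S = 1` for every player `i`. -/
def IsBalancingWeights {n : ℕ} (B : Finset (Finset (Fin n)))
    (lam : Finset (Fin n) → ℝ) : Prop :=
  (∀ S ∈ B, 0 < lam S) ∧ ∀ i : Fin n, ∑ S ∈ B.filter (fun S => i ∈ S), lam S = 1

/-- `B` is a balanced collection: a family of nonempty subsets of `N` admitting a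
system of balancing weights. -/
def IsBalancedCollection {n : ℕ} (B : Finset (Finset (Fin n))) : Prop :=
  (∀ S ∈ B, S ≠ ∅) ∧ ∃ lam, IsBalancingWeights B lam

/-- `B` is a minimal balanced collection: balanced and no proper subfamily is balanced. -/
def IsMinimalBalancedCollection {n : ℕ} (B : Finset (Finset (Fin n))) : Prop :=
  IsBalancedCollection B ∧ ∀ B' ⊂ B, ¬ IsBalancedCollection B'

/-- The family `𝒜* = {S : ∅ ≠ S ⊊ N, x(S) ≤ v(S)}`. -/
noncomputable def Astar {n : ℕ} (v : Finset (Fin n) → ℝ) (x : Fin n → ℝ) :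
    Finset (Finset (Fin n)) :=
  (propSubsets n).filter (fun S => coalSum x S ≤ v S)

/-!
Let `x` be in the core of a closest balanced game `w` to `v`. Resetting a single value `w S` to any
`t ≤ x(S)` keeps `x` in the core, so `w S` must be the point of `(-∞, x(S)]` nearest to `v S`, which
is `min (v S) (x(S))`. Hence the core constraint of `S` is tight at `x` exactly when `x(S) ≤ v(S)`.
On the other hand `∑ λ_S x(S) = x(N) = w(N)` for balancing weights, and `w S ≤ x(S)` with `λ_S > 0`,
so `w` lies in the facet of `𝓑` exactly when all constraints of `𝓑` are tight at `x`.
-/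

lemma eq_min_of_forall_sq_sub_le_sq_sub {R : Type*} [CommRing R] [LinearOrder R]
    [IsStrictOrderedRing R] {a b c : R} (hbc : b ≤ c) (hmin : ∀ t ≤ c, (a - b) ^ 2 ≤ (a - t) ^ 2) :
    b = min a c := by
  rcases le_total a c with hac | hca
  · have hsq : (a - b) ^ 2 ≤ 0 := by simpa using hmin a hac
    rw [min_eq_left hac, eq_comm, ← sub_eq_zero]
    exact pow_eq_zero_iff two_ne_zero |>.mp (hsq.antisymm (sq_nonneg _))
  · have hle : a - b ≤ a - c := le_of_sq_le_sq (hmin c le_rfl) (sub_nonneg.mpr hca)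
    rw [min_eq_right hca]
    exact hbc.antisymm (sub_le_sub_iff_left a |>.mp hle)

section

variable {n : ℕ} {γ v w lam : Finset (Fin n) → ℝ} {x : Fin n → ℝ} {S : Finset (Fin n)}
  {B : Finset (Finset (Fin n))}

lemma mem_propSubsets : S ∈ propSubsets n ↔ S ≠ ∅ ∧ S ≠ univ := by
  simp only [propSubsets, mem_filter, mem_univ, true_and]

lemma mem_Astar : S ∈ Astar v x ↔ S ∈ propSubsets n ∧ coalSum x S ≤ v S :=
  mem_filter

lemma inCore.update (hx : inCore w x) (hS : S ≠ univ) {t : ℝ} (ht : t ≤ coalSum x S) :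
    inCore (Function.update w S t) x := by
  refine ⟨by rw [Function.update_of_ne hS.symm, hx.1], fun T => ?_⟩
  rcases eq_or_ne T S with rfl | hTS
  · rwa [Function.update_self]
  · rw [Function.update_of_ne hTS]
    exact hx.2 T

lemma dist2_le_dist2_update_iff (hS : S ∈ propSubsets n) {t : ℝ} :
    dist2 γ v w ≤ dist2 γ v (Function.update w S t) ↔
      γ S * (v S - w S) ^ 2 ≤ γ S * (v S - t) ^ 2 := by
  have hrest : ∑ T ∈ (propSubsets n).erase S, γ T * (v T - Function.update w S t T) ^ 2 =
      ∑ T ∈ (propSubsets n).erase S, γ T * (v T - w T) ^ 2 :=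
    sum_congr rfl fun T hT => by rw [Function.update_of_ne (ne_of_mem_erase hT)]
  rw [dist2, dist2, ← add_sum_erase _ _ hS, ← add_sum_erase _ _ hS, hrest, Function.update_self,
    add_le_add_iff_right]

lemma IsClosestBalanced.sq_sub_le_sq_sub (hw : IsClosestBalanced γ v w) (hx : inCore w x)
    (hS : S ∈ propSubsets n) (hγ : 0 < γ S) {t : ℝ} (ht : t ≤ coalSum x S) :
    (v S - w S) ^ 2 ≤ (v S - t) ^ 2 := by
  obtain ⟨hw_empty, -, hw_univ, hmin⟩ := hw
  obtain ⟨hS_empty, hS_univ⟩ := mem_propSubsets.mp hS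
  have hdist : dist2 γ v w ≤ dist2 γ v (Function.update w S t) :=
    hmin _ (by rw [Function.update_of_ne hS_empty.symm, hw_empty]) ⟨x, hx.update hS_univ ht⟩
      (by rw [Function.update_of_ne hS_univ.symm, hw_univ])
  exact le_of_mul_le_mul_left ((dist2_le_dist2_update_iff hS).mp hdist) hγ

lemma IsClosestBalanced.apply_eq_min (hw : IsClosestBalanced γ v w) (hx : inCore w x)
    (hS : S ∈ propSubsets n) (hγ : 0 < γ S) : w S = min (v S) (coalSum x S) :=
  eq_min_of_forall_sq_sub_le_sq_sub (hx.2 S) fun _ ht => hw.sq_sub_le_sq_sub hx hS hγ ht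

lemma IsClosestBalanced.apply_eq_coalSum_iff (hw : IsClosestBalanced γ v w) (hx : inCore w x)
    (hS : S ∈ propSubsets n) (hγ : 0 < γ S) : w S = coalSum x S ↔ S ∈ Astar v x := by
  rw [hw.apply_eq_min hx hS hγ, min_eq_right_iff, mem_Astar, and_iff_right hS]

lemma IsBalancingWeights.sum_mul_coalSum (hlam : IsBalancingWeights B lam) (x : Fin n → ℝ) :
    ∑ S ∈ B, lam S * coalSum x S = coalSum x univ :=
  calc ∑ S ∈ B, lam S * coalSum x S
      = ∑ S ∈ B, ∑ i ∈ S, lam S * x i := by simp only [coalSum, mul_sum]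
    _ = ∑ i, ∑ S ∈ B with i ∈ S, lam S * x i :=
        sum_comm' fun S i => by simp only [mem_filter, mem_univ, and_true]
    _ = coalSum x univ := by simp only [coalSum, ← sum_mul, hlam.2, one_mul]

lemma IsBalancingWeights.sum_mul_eq_iff (hlam : IsBalancingWeights B lam) (hx : inCore w x) :
    ∑ S ∈ B, lam S * w S = w univ ↔ ∀ S ∈ B, w S = coalSum x S := by
  have hle : ∀ S ∈ B, lam S * w S ≤ lam S * coalSum x S := fun S hS =>
    mul_le_mul_of_nonneg_left (hx.2 S) (hlam.1 S hS).le
  rw [← hx.1, ← hlam.sum_mul_coalSum x, sum_eq_sum_iff_of_le hle]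
  exact forall₂_congr fun S hS => mul_right_inj' (hlam.1 S hS).ne'

lemma isBalancedCollection_singleton_univ (hn : (univ : Finset (Fin n)) ≠ ∅) :
    IsBalancedCollection ({univ} : Finset (Finset (Fin n))) := by
  refine ⟨fun S hS => mem_singleton.mp hS ▸ hn, fun _ => 1, fun _ _ => one_pos, fun i => ?_⟩
  simp only [filter_singleton, mem_univ, if_true, sum_singleton]

lemma IsMinimalBalancedCollection.subset_propSubsets (hB : IsMinimalBalancedCollection B)
    (hB_ne : B ≠ {univ}) : B ⊆ propSubsets n := by
  obtain ⟨⟨hB_nonempty, -⟩, hB_min⟩ := hB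
  refine fun S hS => mem_propSubsets.mpr ⟨hB_nonempty S hS, ?_⟩
  rintro rfl
  exact hB_min {univ} (ssubset_of_subset_of_ne (singleton_subset_iff.mpr hS) hB_ne.symm)
    (isBalancedCollection_singleton_univ (hB_nonempty univ hS))

theorem facet_iff_subset_Astar_general (hw : IsClosestBalanced γ v w) (hx : inCore w x)
    (hB : B ⊆ propSubsets n) (hγ : ∀ S ∈ B, 0 < γ S) (hlam : IsBalancingWeights B lam) :
    ∑ S ∈ B, lam S * w S = w univ ↔ B ⊆ Astar v x := by
  rw [hlam.sum_mul_eq_iff hx]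
  exact forall₂_congr fun S hS => hw.apply_eq_coalSum_iff hx (hB hS) (hγ S hS)

end

/-- The final lemma of Section 3: for a minimal balanced collection `𝓑 ∈ 𝔅*(n)`
with balancing weights `λ`, the closest balanced game `v*` lies in the facet defined
by `𝓑` (i.e. `∑_{S∈𝓑} λ_S v*(S) = v*(N)`) if and only if `𝓑 ⊆ 𝒜*`, where
`𝒜* = {S : ∅ ≠ S ⊊ N, x*(S) ≤ v(S)}` and `x* ∈ C(v*)`. -/
theorem facet_iff_subset_Astar (n : ℕ) (v vstar γ : Finset (Fin n) → ℝ)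
    (hv0 : v ∅ = 0)
    (hγ : ∀ S ∈ propSubsets n, 0 < γ S)
    (hclosest : IsClosestBalanced γ v vstar)
    (xs : Fin n → ℝ) (hx : inCore vstar xs)
    (B : Finset (Finset (Fin n)))
    (hB : IsMinimalBalancedCollection B) (hBne : B ≠ {Finset.univ})
    (lam : Finset (Fin n) → ℝ) (hlam : IsBalancingWeights B lam) :
    (∑ S ∈ B, lam S * vstar S) = vstar Finset.univ ↔ B ⊆ Astar v xs := by
  have hB_proper : B ⊆ propSubsets n := hB.subset_propSubsets hBne
  exact facet_iff_subset_Astar_general hclosest hx hB_proper (fun S hS => hγ S (hB_proper hS)) hlam
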